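/- Let G=(V,E) be an oriented 3-edge-connected graph with ℓ = |E| − |V|, and let Γ be an abelian group with |Γ| = k ≥ 6. For every function f: E → Γ, the number of Γ-flows φ: E → Γ satisfying φ(e) ≠ f(e) for every e ∈ E is at least (1/2)·((k−6)/2)^ℓ if k is odd, and at least (1/2)·((k−4)/2)^ℓ if k is even. -/

import Mathlib

open scoped Classical

/-- A multigraph with an orientation: each edge `e` has a source `src e` and a target `tgt e`.
Loops and parallel edges are allowed. -/
structure Multigraph (V E : Type) where
  src : E → V
  tgt : E → V

namespace Multigraph

variable {V E : Type}

/-- `u` and `v` are joined by some edge satisfying the predicate `P`. -/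
def adjVia (G : Multigraph V E) (P : E → Prop) (u v : V) : Prop :=
  ∃ e, P e ∧ ((G.src e = u ∧ G.tgt e = v) ∨ (G.src e = v ∧ G.tgt e = u))

/-- `v` is reachable from `u` using only edges satisfying `P`. -/
def Reaches (G : Multigraph V E) (P : E → Prop) : V → V → Prop :=
  Relation.ReflTransGen (G.adjVia P)

/-- The graph is connected when only edges satisfying `P` are kept (all edges deleted
whose predicate fails, all vertices kept). -/
def ConnectedVia (G : Multigraph V E) (P : E → Prop) : Prop :=
  Nonempty V ∧ ∀ u v : V, G.Reaches P u v

def Connected (G : Multigraph V E) : Prop :=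
  G.ConnectedVia fun _ => True

/-- `G` is `k`-edge-connected: it is connected and has no edge cut of size less than `k`;
equivalently, deleting any set of fewer than `k` edges leaves it connected. -/
def EdgeConnected (G : Multigraph V E) (k : ℕ) : Prop :=
  ∀ S : Set E, S.ncard < k → G.ConnectedVia fun e => e ∉ S

/-- The degree of a vertex (loops counted twice). -/
noncomputable def degree (G : Multigraph V E) (v : V) : ℕ :=
  {e | G.src e = v}.ncard + {e | G.tgt e = v}.ncard

/-- Every vertex has degree exactly 3. -/
def Cubic (G : Multigraph V E) : Prop :=
  ∀ v : V, G.degree v = 3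

/-- `φ : E → Γ` is a flow: at every vertex, the sum over outgoing edges equals the
sum over incoming edges. -/
def IsFlow [Fintype E] {Γ : Type} [AddCommGroup Γ] (G : Multigraph V E) (φ : E → Γ) : Prop :=
  ∀ v : V, (∑ e : E, if G.src e = v then φ e else 0) = ∑ e : E, if G.tgt e = v then φ e else 0

/-- The vertex `v` is an endpoint of some edge of `C`. -/
def touches (G : Multigraph V E) (C : Set E) (v : V) : Prop :=
  ∃ e ∈ C, G.src e = v ∨ G.tgt e = v

/-- An edge set `C` is (the edge set of) a cycle: it is nonempty, every vertex it touches
has degree exactly 2 in it, and it is connected. -/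
def IsCycle (G : Multigraph V E) (C : Set E) : Prop :=
  C.Nonempty ∧
  (∀ v : V, G.touches C v →
    ({e ∈ C | G.src e = v}.ncard + {e ∈ C | G.tgt e = v}.ncard = 2)) ∧
  (∀ u v : V, G.touches C u → G.touches C v → G.Reaches (· ∈ C) u v)

/-- `R` is `k`-closed: every cycle with at least one edge outside `R` has at least
`k+1` edges outside `R`. -/
def Closed (G : Multigraph V E) (k : ℕ) (R : Set E) : Prop :=
  ∀ C : Set E, G.IsCycle C → (C \ R).Nonempty → k + 1 ≤ (C \ R).ncard

/-- The `k`-closure `⟨S⟩ₖ` of `S` : the minimal `k`-closed set containing `S`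
(the family of `k`-closed sets is closed under intersections). -/
def kClosure (G : Multigraph V E) (k : ℕ) (S : Set E) : Set E :=
  ⋂₀ {R : Set E | S ⊆ R ∧ G.Closed k R}

/-- `S` is a `k`-base: its `k`-closure is the whole edge set. -/
def IsBase (G : Multigraph V E) (k : ℕ) (S : Set E) : Prop :=
  G.kClosure k S = Set.univ

/-- An edge set `S` is peripheral if `G − S` is connected. -/
def Peripheral (G : Multigraph V E) (S : Set E) : Prop :=
  G.ConnectedVia fun e => e ∉ S

/-- The spanning subgraph `(V, F)` is a forest, i.e. contains no cycle. -/
def IsForest (G : Multigraph V E) (F : Set E) : Prop :=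
  ∀ C : Set E, G.IsCycle C → ¬ C ⊆ F

/-- `vs`, `es` describe a path: distinct vertices `vs 0, …, vs n` and distinct edges
`es 0, …, es (n-1)` where `es i` joins `vs i` and `vs (i+1)`. -/
def IsPath (G : Multigraph V E) {n : ℕ} (vs : Fin (n + 1) → V) (es : Fin n → E) : Prop :=
  Function.Injective vs ∧ Function.Injective es ∧
  ∀ i : Fin n,
    (G.src (es i) = vs i.castSucc ∧ G.tgt (es i) = vs i.succ) ∨
    (G.src (es i) = vs i.succ ∧ G.tgt (es i) = vs i.castSucc)

/-- The edge `e` has `y` as one endpoint and its other endpoint in `X`,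
i.e. `e ∈ E(y, X)`. -/
def joins (G : Multigraph V E) (e : E) (y : V) (X : Set V) : Prop :=
  (G.src e = y ∧ G.tgt e ∈ X) ∨ (G.tgt e = y ∧ G.src e ∈ X)

/-- `W` is the vertex set of a connected component of `G − X`. -/
def IsComponent (G : Multigraph V E) (X W : Set V) : Prop :=
  W.Nonempty ∧ Disjoint W X ∧
  (∀ u ∈ W, ∀ v : V, v ∉ X → G.adjVia (fun _ => True) u v → v ∈ W) ∧
  (∀ u ∈ W, ∀ v ∈ W, G.Reaches (fun e => G.src e ∉ X ∧ G.tgt e ∉ X) u v)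

/-- The subgraph induced on `W`, with only those of its edges satisfying `P` kept,
is connected. -/
def ConnectedOn (G : Multigraph V E) (W : Set V) (P : E → Prop) : Prop :=
  ∀ u ∈ W, ∀ v ∈ W, G.Reaches (fun e => P e ∧ G.src e ∈ W ∧ G.tgt e ∈ W) u v

/-- The subgraph induced on `W` is `k`-edge-connected. -/
def EdgeConnectedOn (G : Multigraph V E) (W : Set V) (k : ℕ) : Prop :=
  ∀ S : Set E, S.ncard < k → G.ConnectedOn W fun e => e ∉ S

/-- Some cycle lies entirely inside the vertex set `X`. -/
def HasCycleIn (G : Multigraph V E) (X : Set V) : Prop :=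
  ∃ C : Set E, G.IsCycle C ∧ ∀ e ∈ C, G.src e ∈ X ∧ G.tgt e ∈ X

/-- The edge cut `E(X, V \ X)`. -/
def cutEdges (G : Multigraph V E) (X : Set V) : Set E :=
  {e | (G.src e ∈ X ∧ G.tgt e ∉ X) ∨ (G.src e ∉ X ∧ G.tgt e ∈ X)}

/-- A cubic graph is cyclically `k`-edge-connected if every edge cut separating two
cycle-containing parts has at least `k` edges. -/
def CyclicallyEdgeConnected (G : Multigraph V E) (k : ℕ) : Prop :=
  ∀ X : Set V, G.HasCycleIn X → G.HasCycleIn Xᶜ → k ≤ (G.cutEdges X).ncard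

/-- `G` is 3-connected: more than 3 vertices, connected, and still connected after
deleting any two vertices. -/
def ThreeConnected [Fintype V] (G : Multigraph V E) : Prop :=
  3 < Fintype.card V ∧ G.Connected ∧
    ∀ u v : V, G.ConnectedOn {w : V | w ≠ u ∧ w ≠ v} fun _ => True

/-- The graph `G − r` obtained by deleting the vertex `r` and all incident edges. -/
def deleteVertex (G : Multigraph V E) (r : V) :
    Multigraph {v : V // v ≠ r} {e : E // G.src e ≠ r ∧ G.tgt e ≠ r} where
  src e := ⟨G.src e.1, e.2.1⟩
  tgt e := ⟨G.tgt e.1, e.2.2⟩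

end Multigraph

namespace Multigraph

section Reachability

variable {V E : Type} {G : Multigraph V E} {P Q : E → Prop} {u v w : V}

theorem Reaches.mono (h : G.Reaches P u v) (hPQ : ∀ e, P e → Q e) : G.Reaches Q u v :=
  Relation.ReflTransGen.mono (fun _ _ ⟨e, he, hj⟩ => ⟨e, hPQ e he, hj⟩) _ _ h

theorem Reaches.symm (h : G.Reaches P u v) : G.Reaches P v u := by
  induction h with
  | refl => exact Relation.ReflTransGen.refl
  | tail _ hbc ih =>
    obtain ⟨e, he, hj⟩ := hbc
    exact Relation.ReflTransGen.head ⟨e, he, hj.symm⟩ ih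

theorem Reaches.trans (h : G.Reaches P u v) (h' : G.Reaches P v w) : G.Reaches P u w :=
  Relation.ReflTransGen.trans h h'

theorem Reaches.refl (u : V) : G.Reaches P u u :=
  Relation.ReflTransGen.refl

theorem Reaches.of_edge {e : E} (he : P e) : G.Reaches P (G.src e) (G.tgt e) :=
  Relation.ReflTransGen.single ⟨e, he, Or.inl ⟨rfl, rfl⟩⟩

theorem Reaches.of_adjVia (h : G.adjVia P u v) : G.Reaches P u v :=
  Relation.ReflTransGen.single h

/-- If every allowed edge has its ends joined in another way, reachability is inherited. -/
theorem Reaches.of_forall_edge (h : G.Reaches P u v)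
    (hPQ : ∀ e, P e → G.Reaches Q (G.src e) (G.tgt e)) : G.Reaches Q u v := by
  induction h with
  | refl => exact Reaches.refl _
  | tail _ hbc ih =>
    obtain ⟨e, he, ⟨rfl, rfl⟩ | ⟨rfl, rfl⟩⟩ := hbc
    · exact ih.trans (hPQ e he)
    · exact ih.trans (hPQ e he).symm

theorem Reaches.exists_cutEdges (h : G.Reaches P u v) {X : Set V} (hu : u ∈ X) (hv : v ∉ X) :
    ∃ e ∈ G.cutEdges X, P e := by
  by_contra hcon
  push Not at hcon
  apply hv
  clear hv
  induction h with
  | refl => exact hu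
  | tail _ hbc ih =>
    obtain ⟨e, he, ⟨rfl, rfl⟩ | ⟨rfl, rfl⟩⟩ := hbc
    · by_contra hx
      exact hcon e (Or.inl ⟨ih, hx⟩) he
    · by_contra hx
      exact hcon e (Or.inr ⟨hx, ih⟩) he

/-- A vertex reached from `u` by allowed edges is `u` itself, or can be reached by leaving `u`
along one edge and never coming back to `u`. -/
theorem Reaches.eq_or_last_exit (h : G.Reaches P u v) :
    u = v ∨ ∃ e w, P e ∧ ((G.src e = u ∧ G.tgt e = w) ∨ (G.src e = w ∧ G.tgt e = u)) ∧
      G.Reaches (fun e' => P e' ∧ G.src e' ≠ u ∧ G.tgt e' ≠ u) w v := by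
  have avoid : G.Reaches (fun e' => P e' ∧ G.src e' ≠ u ∧ G.tgt e' ≠ u) u v → u = v := by
    intro h'
    rcases Relation.ReflTransGen.cases_head h' with h' | ⟨c, ⟨e, ⟨_, hs, ht⟩, hj⟩, _⟩
    · exact h'
    · rcases hj with ⟨h1, _⟩ | ⟨_, h1⟩
      · exact absurd h1 hs
      · exact absurd h1 ht
  have key : ∀ x, G.Reaches P x v →
      G.Reaches (fun e' => P e' ∧ G.src e' ≠ u ∧ G.tgt e' ≠ u) x v ∨ u = v ∨
      ∃ e w, P e ∧ ((G.src e = u ∧ G.tgt e = w) ∨ (G.src e = w ∧ G.tgt e = u)) ∧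
      G.Reaches (fun e' => P e' ∧ G.src e' ≠ u ∧ G.tgt e' ≠ u) w v := by
    intro x hx
    induction hx using Relation.ReflTransGen.head_induction_on with
    | refl => exact Or.inl (Reaches.refl _)
    | @head x y hxy _ ih =>
      rcases ih with ih | ih
      · obtain ⟨e, he, hj⟩ := hxy
        by_cases hxu : x = u
        · subst hxu
          exact Or.inr (Or.inr ⟨e, y, he, hj, ih⟩)
        · by_cases hyu : y = u
          · subst hyu
            exact Or.inr (Or.inl (avoid ih))
          · left
            refine Reaches.trans (Reaches.of_adjVia ⟨e, ⟨he, ?_⟩, hj⟩) ih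
            rcases hj with ⟨h1, h2⟩ | ⟨h1, h2⟩ <;> simp [h1, h2, hxu, hyu]
      · exact Or.inr ih
  rcases key u h with h' | h'
  · exact Or.inl (avoid h')
  · exact h'

end Reachability

section Boundary

variable {V E : Type} [Fintype E] {A : Type} [AddCommGroup A]

/-- The boundary of an edge weighting: outgoing minus incoming sum at each vertex. -/
noncomputable def boundary (G : Multigraph V E) : (E → A) →+ (V → A) where
  toFun φ v := (∑ e, if G.src e = v then φ e else 0) - ∑ e, if G.tgt e = v then φ e else 0
  map_zero' := by ext; simp
  map_add' φ ψ := by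
    ext v
    have hsplit : ∀ (p : E → Prop), (∑ e, if p e then φ e + ψ e else 0) =
        (∑ e, if p e then φ e else 0) + ∑ e, if p e then ψ e else 0 := by
      intro p
      rw [← Finset.sum_add_distrib]
      refine Finset.sum_congr rfl fun e _ => ?_
      split_ifs <;> simp
    simp only [Pi.add_apply, hsplit]
    abel

variable {G : Multigraph V E}

theorem boundary_apply (φ : E → A) (v : V) : G.boundary φ v =
    (∑ e, if G.src e = v then φ e else 0) - ∑ e, if G.tgt e = v then φ e else 0 := rfl

theorem isFlow_iff_boundary_eq_zero (φ : E → A) : G.IsFlow φ ↔ G.boundary φ = 0 := by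
  simp only [IsFlow, funext_iff, boundary_apply, Pi.zero_apply, sub_eq_zero]

theorem boundary_single (e : E) (a : A) :
    G.boundary (Pi.single e a) = Pi.single (G.src e) a - Pi.single (G.tgt e) a := by
  ext v
  simp only [boundary_apply, Pi.sub_apply, Pi.single_apply]
  congr 1 <;>
  · rw [Finset.sum_eq_single e]
    · simp [eq_comm]
    · intro b _ hb
      simp [hb]
    · simp

theorem boundary_smul_const (C : E → ℤ) (a : A) :
    G.boundary (fun e => C e • a) = fun v => G.boundary C v • a := by
  ext v
  simp only [boundary_apply, sub_smul, Finset.sum_smul, ite_smul, zero_smul]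

theorem sum_boundary [Fintype V] (X : Set V) (φ : E → A) :
    ∑ v, (if v ∈ X then G.boundary φ v else 0) =
      ∑ e, ((if G.src e ∈ X then φ e else 0) - if G.tgt e ∈ X then φ e else 0) := by
  have hswap : ∀ r : E → V, ∑ v, (if v ∈ X then ∑ e, (if r e = v then φ e else 0) else 0) =
      ∑ e, if r e ∈ X then φ e else 0 := by
    intro r
    have : ∀ v, (if v ∈ X then ∑ e, (if r e = v then φ e else 0) else 0) =
        ∑ e, if r e = v then (if r e ∈ X then φ e else 0) else 0 := by
      intro v
      split_ifs with hv
      · refine Finset.sum_congr rfl fun e _ => ?_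
        by_cases h : r e = v
        · simp [h, hv]
        · simp [h]
      · symm
        refine Finset.sum_eq_zero fun e _ => ?_
        by_cases h : r e = v
        · simp [h, hv]
        · simp [h]
    simp only [this]
    rw [Finset.sum_comm]
    simp
  rw [Finset.sum_sub_distrib, ← hswap, ← hswap, ← Finset.sum_sub_distrib]
  refine Finset.sum_congr rfl fun v _ => ?_
  split_ifs <;> simp [boundary_apply]

/-- Reachable vertices are joined by a path, seen as a chain with coefficients `0, 1, -1`. -/
theorem Reaches.exists_signed_chain {P : E → Prop} {u v : V} (h : G.Reaches P u v) :
    ∃ p : E → ℤ, (∀ e, |p e| ≤ 1) ∧ (∀ e, p e ≠ 0 → P e) ∧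
      G.boundary p = Pi.single u 1 - Pi.single v 1 := by
  induction hn : {e | P e}.ncard using Nat.strong_induction_on generalizing P u v with
  | _ n ih =>
  rcases h.eq_or_last_exit with rfl | ⟨e, w, he, hj, hw⟩
  · exact ⟨0, by simp, by simp, by simp⟩
  · have hlt : {e' | P e' ∧ G.src e' ≠ u ∧ G.tgt e' ≠ u}.ncard < n := by
      rw [← hn]
      refine Set.ncard_lt_ncard ⟨fun e' h' => h'.1, fun hsub => ?_⟩ (Set.toFinite _)
      have := hsub he
      rcases hj with ⟨h1, _⟩ | ⟨_, h1⟩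
      · exact this.2.1 h1
      · exact this.2.2 h1
    obtain ⟨p, hp1, hpP, hpb⟩ := ih _ hlt hw rfl
    have hpe : p e = 0 := by
      by_contra hne
      have := hpP e hne
      rcases hj with ⟨h1, _⟩ | ⟨_, h1⟩
      · exact this.2.1 h1
      · exact this.2.2 h1
    have build : ∀ s : ℤ, |s| ≤ 1 →
        G.boundary (Pi.single e s) = Pi.single u (1 : ℤ) - Pi.single w 1 →
        ∃ p : E → ℤ, (∀ e, |p e| ≤ 1) ∧ (∀ e, p e ≠ 0 → P e) ∧
          G.boundary p = Pi.single u 1 - Pi.single v 1 := by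
      intro s hs hb
      refine ⟨p + Pi.single e s, fun e' => ?_, fun e' he' => ?_, ?_⟩
      · by_cases h : e' = e
        · subst h; simpa [hpe] using hs
        · simpa [h] using hp1 e'
      · by_cases h : e' = e
        · exact h ▸ he
        · exact (hpP e' (by simpa [h] using he')).1
      · rw [map_add, hb, hpb]; abel
    rcases hj with ⟨h1, h2⟩ | ⟨h1, h2⟩
    · exact build 1 (by simp) (by rw [boundary_single, h1, h2])
    · refine build (-1) (by simp) ?_
      rw [boundary_single, h1, h2, Pi.single_neg, Pi.single_neg]; abel

/-- The cycle closing up an edge whose ends are joined by other edges. -/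
theorem exists_signed_cycle {P : E → Prop} {e : E} (he : ¬ P e)
    (h : G.Reaches P (G.src e) (G.tgt e)) :
    ∃ C : E → ℤ, (∀ e', |C e'| ≤ 1) ∧ (∀ e', C e' ≠ 0 → P e' ∨ e' = e) ∧ C e = 1 ∧
      G.boundary C = 0 := by
  obtain ⟨p, hp1, hpP, hpb⟩ := h.symm.exists_signed_chain
  have hpe : p e = 0 := by
    by_contra hne
    exact he (hpP e hne)
  refine ⟨p + Pi.single e 1, fun e' => ?_, fun e' he' => ?_, by simp [hpe], ?_⟩
  · by_cases h : e' = e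
    · subst h; simp [hpe]
    · simpa [h] using hp1 e'
  · by_cases h : e' = e
    · exact Or.inr h
    · exact Or.inl (hpP e' (by simpa [h] using he'))
  · rw [map_add, hpb, boundary_single]; abel

/-- The ends of an edge in the support of a flow are joined by other edges of the support. -/
theorem reaches_of_flow_ne_zero [Fintype V] {φ : E → A} (hφ : G.boundary φ = 0) {e : E}
    (he : φ e ≠ 0) : G.Reaches (fun e' => φ e' ≠ 0 ∧ e' ≠ e) (G.src e) (G.tgt e) := by
  by_contra hcon
  set X : Set V := {v | G.Reaches (fun e' => φ e' ≠ 0 ∧ e' ≠ e) (G.src e) v} with hX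
  have hsum := sum_boundary (G := G) X φ
  rw [hφ, Finset.sum_eq_single e] at hsum
  · rw [if_pos (show G.src e ∈ X from Reaches.refl _), if_neg (show G.tgt e ∉ X from hcon)] at hsum
    simp at hsum
    exact he hsum.symm
  · intro e' _ hne
    by_cases h0 : φ e' = 0
    · simp [h0]
    · have hedge := Reaches.of_edge (G := G) (P := fun e' => φ e' ≠ 0 ∧ e' ≠ e) ⟨h0, hne⟩
      have : G.src e' ∈ X ↔ G.tgt e' ∈ X := ⟨fun h => h.trans hedge, fun h => h.trans hedge.symm⟩
      simp [this]
  · simp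

/-- Every flow modulo 2 lifts to an integer flow with values `0, 1, -1`. -/
theorem exists_signed_lift [Fintype V] (ψ : E → ZMod 2) (hψ : G.boundary ψ = 0) :
    ∃ g : E → ℤ, (∀ e, |g e| ≤ 1) ∧ (∀ e, g e = 0 ↔ ψ e = 0) ∧ G.boundary g = 0 := by
  induction hn : {e | ψ e ≠ 0}.ncard using Nat.strong_induction_on generalizing ψ with
  | _ n ih =>
  by_cases hzero : ∀ e, ψ e = 0
  · exact ⟨0, by simp, by simpa using hzero, by simp⟩
  · push Not at hzero
    obtain ⟨e, he⟩ := hzero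
    obtain ⟨C, hC1, hCP, hCe, hCb⟩ :=
      exists_signed_cycle (P := fun e' => ψ e' ≠ 0 ∧ e' ≠ e) (by simp)
        (reaches_of_flow_ne_zero hψ he)
    have hCψ : ∀ e', C e' ≠ 0 → ψ e' = 1 := by
      intro e' h'
      have : ψ e' ≠ 0 := by
        rcases hCP e' h' with h | rfl
        exacts [h.1, he]
      revert this
      generalize ψ e' = x
      revert x
      decide
    have hCcast : ∀ e', C e' ≠ 0 → C e' • (1 : ZMod 2) = 1 := by
      intro e' h'
      have := abs_le.mp (hC1 e')
      have h3 : C e' = 1 ∨ C e' = -1 := by omega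
      rcases h3 with h | h <;> rw [h] <;> decide
    set ψ' : E → ZMod 2 := ψ - fun e' => C e' • (1 : ZMod 2) with hψ'
    have hψ'val : ∀ e', ψ' e' = if C e' = 0 then ψ e' else 0 := by
      intro e'
      split_ifs with h
      · simp [hψ', h]
      · have h1 := hCcast e' h
        have h2 := hCψ e' h
        rw [hψ', Pi.sub_apply, h1, h2, sub_self]
    have hψ'b : G.boundary ψ' = 0 := by
      rw [hψ', map_sub, hψ, boundary_smul_const, hCb]
      ext; simp
    have hlt : {e' | ψ' e' ≠ 0}.ncard < n := by
      rw [← hn]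
      refine Set.ncard_lt_ncard ⟨fun e' h' => ?_, fun hsub => ?_⟩ (Set.toFinite _)
      · simp only [Set.mem_ofPred_eq, hψ'val] at h' ⊢
        split_ifs at h' with h
        exacts [h', absurd rfl h']
      · have := hsub he
        simp [hψ'val, hCe] at this
    obtain ⟨g, hg1, hg0, hgb⟩ := ih _ hlt ψ' hψ'b rfl
    have hgC : ∀ e', C e' ≠ 0 → g e' = 0 := fun e' h => (hg0 e').mpr (by simp [hψ'val, h])
    refine ⟨g + C, fun e' => ?_, fun e' => ?_, by rw [map_add, hgb, hCb, add_zero]⟩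
    · by_cases h : C e' = 0
      · simpa [h] using hg1 e'
      · simpa [hgC e' h] using hC1 e'
    · by_cases h : C e' = 0
      · have := hg0 e'
        rw [hψ'val, if_pos h] at this
        simpa [h] using this
      · simp [hgC e' h, h, hCψ e' h]

/-- If deleting `S` leaves the graph connected, values on `S` extend to a flow. -/
theorem exists_flow_extending {S : Set E} (hS : ∀ u v, G.Reaches (fun e => e ∉ S) u v)
    (h : E → A) : ∃ ψ : E → A, G.boundary ψ = 0 ∧ ∀ e ∈ S, ψ e = h e := by
  have hcyc : ∀ s : E, ∃ C : E → ℤ, G.boundary C = 0 ∧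
      ∀ e ∈ S, s ∈ S → C e = if e = s then 1 else 0 := by
    intro s
    by_cases hs : s ∈ S
    · obtain ⟨C, -, hCP, hCe, hCb⟩ := exists_signed_cycle (P := fun e => e ∉ S) (e := s)
        (by simpa using hs) (hS _ _)
      refine ⟨C, hCb, fun e he _ => ?_⟩
      split_ifs with h
      · rw [h, hCe]
      · by_contra hne
        rcases hCP e hne with h' | h'
        exacts [h' he, h h']
    · exact ⟨0, by simp, fun _ _ h => absurd h hs⟩
  choose C hCb hC using hcyc
  refine ⟨∑ s, if s ∈ S then (fun e => C s e • h s) else 0, ?_, fun e he => ?_⟩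
  · rw [map_sum]
    refine Finset.sum_eq_zero fun s _ => ?_
    split_ifs
    · rw [boundary_smul_const, hCb]; ext; simp
    · simp
  · rw [Finset.sum_apply, Finset.sum_eq_single e]
    · simp [he, hC e e he he]
    · intro s _ hs
      split_ifs with hsS
      · simp [hC s e he hsS, Ne.symm hs]
      · rfl
    · simp

end Boundary

end Multigraph

namespace Multigraph

/-- A set of edges is two-closed if it contains every signed cycle having at most two edges
outside of it. -/
def TwoClosed {V E : Type} [Fintype E] (G : Multigraph V E) (R : Set E) : Prop :=
  ∀ C : E → ℤ, (∀ e, |C e| ≤ 1) → G.boundary C = 0 → ({e | C e ≠ 0} \ R).ncard ≤ 2 →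
    {e | C e ≠ 0} ⊆ R

section Counting

variable {V E : Type} [Fintype V] [Fintype E] {A : Type} [AddCommGroup A]

/-- Total sum of a vertex weighting. -/
def totalSum (V A : Type) [Fintype V] [AddCommGroup A] : (V → A) →+ A where
  toFun β := ∑ v, β v
  map_zero' := by simp
  map_add' := by simp [Finset.sum_add_distrib]

variable {G : Multigraph V E}

theorem range_boundary (hconn : ∀ u v, G.Reaches (fun _ => True) u v) :
    (G.boundary (A := A)).range = (totalSum V A).ker := by
  ext β
  constructor
  · rintro ⟨φ, rfl⟩
    have := sum_boundary (G := G) Set.univ φ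
    simpa [AddMonoidHom.mem_ker, totalSum] using this
  · intro hβ
    have hβ' : ∑ v, β v = 0 := hβ
    rcases isEmpty_or_nonempty V with hV | ⟨⟨r⟩⟩
    · rw [Subsingleton.elim β 0]
      exact zero_mem _
    have hdecomp : β = ∑ v, (Pi.single v (β v) - Pi.single r (β v)) := by
      rw [Finset.sum_sub_distrib, Finset.univ_sum_single]
      have : ∑ v, (Pi.single r (β v) : V → A) = Pi.single r (∑ v, β v) :=
        (map_sum (AddMonoidHom.single (fun _ : V => A) r) β Finset.univ).symm
      rw [this, hβ', Pi.single_zero, sub_zero]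
    rw [hdecomp]
    refine sum_mem fun v _ => ?_
    obtain ⟨p, -, -, hp⟩ := (hconn v r).exists_signed_chain
    refine ⟨fun e => p e • β v, ?_⟩
    rw [boundary_smul_const, hp]
    ext w
    simp only [Pi.sub_apply, sub_smul, Pi.single_apply, ite_smul, one_smul, zero_smul]

variable [Fintype A]

/-- Flows of `G` avoiding prescribed finite sets of values outside `R`. -/
noncomputable def avoiding (G : Multigraph V E) (bad : E → Finset A) (R : Set E) :
    Finset (E → A) :=
  Finset.univ.filter fun φ => G.boundary φ = 0 ∧ ∀ e, e ∉ R → φ e ∉ bad e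

theorem mem_avoiding {bad : E → Finset A} {R : Set E} {φ : E → A} :
    φ ∈ G.avoiding bad R ↔ G.boundary φ = 0 ∧ ∀ e, e ∉ R → φ e ∉ bad e := by
  simp [avoiding]

theorem card_avoiding_univ (hconn : ∀ u v, G.Reaches (fun _ => True) u v) [Nonempty V]
    (bad : E → Finset A) :
    (G.avoiding bad Set.univ).card * Fintype.card A ^ Fintype.card V =
      Fintype.card A ^ (Fintype.card E + 1) := by
  have hsurj : Function.Surjective (totalSum V A) := by
    intro a
    obtain ⟨r⟩ := ‹Nonempty V›
    exact ⟨Pi.single r a, by simp [totalSum]⟩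
  have h1 := (G.boundary (A := A)).ker.card_mul_index
  have h2 := (totalSum V A).ker.card_mul_index
  rw [AddSubgroup.index_ker, range_boundary hconn] at h1
  rw [AddSubgroup.index_ker, AddMonoidHom.range_eq_top.mpr hsurj, AddSubgroup.card_top] at h2
  have h3 : Nat.card (G.boundary (A := A)).ker = (G.avoiding bad Set.univ).card := by
    rw [← Nat.card_eq_finsetCard]
    exact Nat.card_congr (Equiv.subtypeEquivRight fun φ => by
      simp [mem_avoiding, AddMonoidHom.mem_ker])
  simp only [Nat.card_eq_fintype_card, Fintype.card_fun] at h1 h2 h3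
  rw [← h2, ← h3, ← mul_assoc, h1, pow_succ]

theorem card_avoiding_step {bad : E → Finset A} {q : ℕ} (hq : ∀ e, (bad e).card ≤ q)
    {R : Set E} {C : E → ℤ} (hC1 : ∀ e, |C e| ≤ 1) (hCb : G.boundary C = 0)
    (hCR : ({e | C e ≠ 0} \ R).ncard ≤ 2) :
    (Fintype.card A - 2 * q) * (G.avoiding bad (R ∪ {e | C e ≠ 0})).card ≤
      Fintype.card A * (G.avoiding bad R).card := by
  set D : Finset E := Finset.univ.filter fun e => C e ≠ 0 ∧ e ∉ R with hD
  have hDcard : D.card ≤ 2 := by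
    rw [← Set.ncard_coe_finset]
    convert hCR using 2
    ext e
    simp [hD]
  have hshift : ∀ (φ : E → A) (a : A), G.boundary φ = 0 →
      G.boundary (φ + fun e => C e • a) = 0 := by
    intro φ a hφ
    rw [map_add, hφ, boundary_smul_const, hCb]
    ext; simp
  have h := Finset.card_mul_le_card_mul (s := G.avoiding bad (R ∪ {e | C e ≠ 0}))
    (t := (Finset.univ : Finset A)) (m := Fintype.card A - 2 * q) (n := (G.avoiding bad R).card)
    (fun φ a => (φ + fun e => C e • a) ∈ G.avoiding bad R) ?_ ?_
  · rwa [mul_comm, Finset.card_univ] at h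
  · intro φ hφ
    rw [mem_avoiding] at hφ
    have hcover : (Finset.univ : Finset A) ⊆
        (Finset.univ.bipartiteAbove
          (fun (φ : E → A) (a : A) => (φ + fun e => C e • a) ∈ G.avoiding bad R) φ) ∪
        D.biUnion fun e => Finset.univ.filter fun a => φ e + C e • a ∈ bad e := by
      intro a _
      simp only [Finset.mem_union, Finset.mem_bipartiteAbove, Finset.mem_univ, true_and,
        Finset.mem_biUnion, Finset.mem_filter]
      by_contra hcon
      push Not at hcon
      refine hcon.1 (mem_avoiding.mpr ⟨hshift φ a hφ.1, fun e he => ?_⟩)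
      by_cases hCe : C e = 0
      · simpa [hCe] using hφ.2 e (by simp [he, hCe])
      · exact hcon.2 e (by simp [hD, he, hCe])
    have hfiber : ∀ e ∈ D, (Finset.univ.filter fun a => φ e + C e • a ∈ bad e).card ≤ q := by
      intro e he
      refine le_trans (Finset.card_le_card_of_injOn (fun a => φ e + C e • a) ?_ ?_) (hq e)
      · intro a ha
        simpa using ha
      · intro a _ b _ hab
        have hCe : C e ≠ 0 := by
          simp only [hD, Finset.mem_filter] at he
          exact he.2.1
        have := abs_le.mp (hC1 e)
        have h3 : C e = 1 ∨ C e = -1 := by omega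
        rcases h3 with h | h <;> simpa [h] using hab
    have h1 := (Finset.card_le_card hcover).trans (Finset.card_union_le _ _)
    have h2 := Finset.card_biUnion_le_card_mul _ _ _ hfiber
    have h3 : D.card * q ≤ 2 * q := Nat.mul_le_mul_right _ hDcard
    rw [Finset.card_univ] at h1
    omega
  · intro a _
    refine Finset.card_le_card_of_injOn (fun φ => φ + fun e => C e • a) ?_ ?_
    · intro φ hφ
      simpa [Finset.mem_bipartiteBelow] using (Finset.mem_bipartiteBelow _ |>.mp hφ).2
    · intro φ _ ψ _ h
      exact add_right_cancel h

theorem card_vanishing_step {R : Set E} {C : E → ℤ} (hC1 : ∀ e, |C e| ≤ 1)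
    (hCb : G.boundary C = 0) (hCR : ¬ {e | C e ≠ 0} ⊆ R) :
    Fintype.card A * (G.avoiding (fun _ => ({0}ᶜ : Finset A)) R).card ≤
      (G.avoiding (fun _ => ({0}ᶜ : Finset A)) (R ∪ {e | C e ≠ 0})).card := by
  obtain ⟨e, he, heR⟩ := Set.not_subset.mp hCR
  rw [← Finset.card_univ, ← Finset.card_product]
  refine Finset.card_le_card_of_injOn (fun x => x.2 + fun e => C e • x.1) ?_ ?_
  · rintro ⟨a, φ⟩ hx
    simp only [Finset.coe_product, Set.mem_prod, Finset.mem_coe, mem_avoiding] at hx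
    simp only [Finset.mem_coe, mem_avoiding]
    refine ⟨?_, fun e' he' => ?_⟩
    · rw [map_add, hx.2.1, boundary_smul_const, hCb]
      ext; simp
    · simp only [Set.mem_union, Set.mem_ofPred_eq, not_or, not_not] at he'
      simpa [he'.2] using hx.2.2 e' he'.1
  · rintro ⟨a, φ⟩ hx ⟨b, ψ⟩ hy hxy
    simp only [Finset.coe_product, Set.mem_prod, Finset.mem_coe, mem_avoiding] at hx hy
    have h0 := hx.2.2 e heR
    have h1 := hy.2.2 e heR
    simp only [Finset.mem_compl, Finset.mem_singleton, not_not] at h0 h1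
    have h2 := congrFun hxy e
    simp only [Pi.add_apply, h0, h1, zero_add] at h2
    have h3 := abs_le.mp (hC1 e)
    have he0 : C e ≠ 0 := he
    have h4 : C e = 1 ∨ C e = -1 := by omega
    have hab : a = b := by rcases h4 with h | h <;> simpa [h] using h2
    subst hab
    simp only [Prod.mk.injEq, true_and]
    exact add_right_cancel hxy

theorem exists_card_avoiding_le {S : Set E} (hS : ∀ R, S ⊆ R → G.TwoClosed R → R = Set.univ)
    {bad : E → Finset A} {q : ℕ} (hq : ∀ e, (bad e).card ≤ q) {R : Set E} (hR : S ⊆ R) :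
    ∃ t : ℕ, (Fintype.card A - 2 * q) ^ t * (G.avoiding bad Set.univ).card ≤
        Fintype.card A ^ t * (G.avoiding bad R).card ∧
      Fintype.card A ^ t * (G.avoiding (fun _ => ({0}ᶜ : Finset A)) R).card ≤
        (G.avoiding (fun _ => ({0}ᶜ : Finset A)) Set.univ).card := by
  induction hn : Rᶜ.ncard using Nat.strong_induction_on generalizing R with
  | _ n ih =>
  by_cases hcl : G.TwoClosed R
  · rw [hS R hR hcl]
    exact ⟨0, by simp, by simp⟩
  · unfold TwoClosed at hcl
    push Not at hcl
    obtain ⟨C, hC1, hCb, hC2, hCR⟩ := hcl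
    have hlt : (R ∪ {e | C e ≠ 0})ᶜ.ncard < n := by
      rw [← hn]
      obtain ⟨e, he, heR⟩ := Set.not_subset.mp hCR
      refine Set.ncard_lt_ncard ⟨fun e' h' h => h' (Or.inl h), fun hsub => ?_⟩ (Set.toFinite _)
      exact hsub heR (Or.inr he)
    obtain ⟨t, h1, h2⟩ := ih _ hlt (hR.trans Set.subset_union_left) rfl
    have h3 := card_avoiding_step (G := G) hq hC1 hCb hC2
    have h4 := card_vanishing_step (G := G) (A := A) hC1 hCb hCR
    refine ⟨t + 1, ?_, ?_⟩
    · calc (Fintype.card A - 2 * q) ^ (t + 1) * (G.avoiding bad Set.univ).card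
          = (Fintype.card A - 2 * q) *
            ((Fintype.card A - 2 * q) ^ t * (G.avoiding bad Set.univ).card) := by ring
        _ ≤ (Fintype.card A - 2 * q) *
            (Fintype.card A ^ t * (G.avoiding bad (R ∪ {e | C e ≠ 0})).card) :=
            Nat.mul_le_mul_left _ h1
        _ = Fintype.card A ^ t *
            ((Fintype.card A - 2 * q) * (G.avoiding bad (R ∪ {e | C e ≠ 0})).card) := by ring
        _ ≤ Fintype.card A ^ t * (Fintype.card A * (G.avoiding bad R).card) :=
            Nat.mul_le_mul_left _ h3
        _ = _ := by ring
    · refine le_trans ?_ h2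
      rw [pow_succ, mul_assoc]
      exact Nat.mul_le_mul_left _ h4

/-- Flows avoiding `q` values per edge outside a set whose two-closure is everything. -/
theorem pow_le_card_avoiding (hconn : ∀ u v, G.Reaches (fun _ => True) u v) [Nonempty V]
    (hA : 1 < Fintype.card A)
    {S : Set E} (hS : ∀ R, S ⊆ R → G.TwoClosed R → R = Set.univ)
    {bad : E → Finset A} {q : ℕ} (hq : ∀ e, (bad e).card ≤ q)
    {d : ℕ} (hd : d + Fintype.card V = Fintype.card E + 1) :
    (Fintype.card A - 2 * q) ^ d ≤ (G.avoiding bad S).card := by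
  have hall : ∀ bad : E → Finset A, (G.avoiding bad Set.univ).card = Fintype.card A ^ d := by
    intro bad
    have h := card_avoiding_univ (G := G) hconn bad
    rw [← hd, pow_add] at h
    exact Nat.eq_of_mul_eq_mul_right (by positivity) h
  obtain ⟨t, h1, h2⟩ := exists_card_avoiding_le hS hq subset_rfl
  rw [hall] at h1 h2
  have hpos : 0 < (G.avoiding (fun _ => ({0}ᶜ : Finset A)) S).card :=
    Finset.card_pos.mpr ⟨0, by simp [mem_avoiding]⟩
  have htd : t ≤ d := (Nat.pow_le_pow_iff_right hA).mp ((Nat.le_mul_of_pos_right _ hpos).trans h2)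
  obtain ⟨s, rfl⟩ := Nat.exists_eq_add_of_le htd
  refine Nat.le_of_mul_le_mul_left (le_trans ?_ h1) (show 0 < Fintype.card A ^ t by positivity)
  calc Fintype.card A ^ t * (Fintype.card A - 2 * q) ^ (t + s)
      = (Fintype.card A - 2 * q) ^ t *
        (Fintype.card A ^ t * (Fintype.card A - 2 * q) ^ s) := by ring
    _ ≤ (Fintype.card A - 2 * q) ^ t * (Fintype.card A ^ t * Fintype.card A ^ s) := by
        gcongr
        exact Nat.sub_le _ _
    _ = _ := by ring

/-- Flows avoiding `f` outside `S`, together with its translates by `c`, can be corrected on `S`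
by multiples of `c`, at the cost of a factor counting the flows modulo 2. -/
theorem pow_le_two_pow_mul_card (hconn : ∀ u v, G.Reaches (fun _ => True) u v) [Nonempty V]
    {S : Set E} (hS : ∀ R, S ⊆ R → G.TwoClosed R → R = Set.univ)
    (hper : ∀ u v, G.Reaches (fun e => e ∉ S) u v) (f : E → A) {c : A} (hc : c ≠ 0) {q : ℕ}
    (hq : ∀ a : A, ({a, a + c, a - c} : Finset A).card ≤ q)
    {d : ℕ} (hd : d + Fintype.card V = Fintype.card E + 1) :
    (Fintype.card A - 2 * q) ^ d ≤
      2 ^ d * Nat.card {φ : E → A // G.IsFlow φ ∧ ∀ e, φ e ≠ f e} := by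
  set bad : E → Finset A := fun e => {f e, f e + c, f e - c} with hbad
  refine (pow_le_card_avoiding hconn (Fintype.one_lt_card_iff.mpr ⟨c, 0, hc⟩) hS
    (bad := bad) (fun e => hq _) hd).trans ?_
  have hgood : Nat.card {φ : E → A // G.IsFlow φ ∧ ∀ e, φ e ≠ f e} =
      (G.avoiding (fun e => {f e}) ∅).card := by
    rw [← Nat.card_eq_finsetCard]
    exact Nat.card_congr (Equiv.subtypeEquivRight fun φ => by
      simp [mem_avoiding, isFlow_iff_boundary_eq_zero])
  have htwo : (G.avoiding (A := ZMod 2) (fun _ => ∅) Set.univ).card = 2 ^ d := by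
    have h := card_avoiding_univ (A := ZMod 2) (G := G) hconn (fun _ => ∅)
    rw [← hd, pow_add, ZMod.card] at h
    exact Nat.eq_of_mul_eq_mul_right (by positivity) h
  rw [hgood, ← htwo, ← Finset.card_product]
  have hlift : ∀ ψ : E → ZMod 2, ∃ g : E → ℤ, G.boundary ψ = 0 →
      (∀ e, |g e| ≤ 1) ∧ (∀ e, g e = 0 ↔ ψ e = 0) ∧ G.boundary g = 0 := by
    intro ψ
    by_cases h : G.boundary ψ = 0
    · obtain ⟨g, hg⟩ := exists_signed_lift ψ h
      exact ⟨g, fun _ => hg⟩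
    · exact ⟨0, fun h' => absurd h' h⟩
  choose g hg using hlift
  have hext : ∀ φ : E → A, ∃ ψ : E → ZMod 2, G.boundary ψ = 0 ∧
      ∀ e ∈ S, ψ e = if φ e = f e then 1 else 0 :=
    fun φ => exists_flow_extending hper _
  choose ψ hψb hψ using hext
  refine Finset.card_le_card_of_injOn
    (fun φ => (ψ φ, φ + fun e => g (ψ φ) e • c)) ?_ ?_
  · intro φ hφ
    obtain ⟨hφb, hφ⟩ := mem_avoiding.mp (Finset.mem_coe.mp hφ)
    obtain ⟨hg1, hg0, hgb⟩ := hg _ (hψb φ)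
    simp only [Finset.coe_product, Set.mem_prod, Finset.mem_coe, mem_avoiding]
    refine ⟨⟨hψb φ, by simp⟩, ?_, fun e _ => ?_⟩
    · rw [map_add, hφb, boundary_smul_const, hgb]
      ext; simp
    · have h1 := abs_le.mp (hg1 e)
      have h2 : g (ψ φ) e = 0 ∨ g (ψ φ) e = 1 ∨ g (ψ φ) e = -1 := by omega
      simp only [Finset.mem_singleton, Pi.add_apply]
      by_cases heS : e ∈ S
      · have h3 := hψ φ e heS
        have h4 := hg0 e
        by_cases h5 : φ e = f e
        · rw [if_pos h5] at h3
          rw [h3] at h4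
          rcases h2 with h | h | h
          · exact absurd (h4.mp h) (by decide)
          · simp [h, h5, hc]
          · simp [h, h5, hc]
        · rw [if_neg h5] at h3
          simpa [h4.mpr h3] using h5
      · have h3 := hφ e heS
        simp only [hbad, Finset.mem_insert, Finset.mem_singleton, not_or] at h3
        rcases h2 with h | h | h
        · simpa [h] using h3.1
        · intro h'
          rw [h, one_smul] at h'
          exact h3.2.2 (eq_sub_of_add_eq h')
        · intro h'
          rw [h, neg_smul, one_smul, ← sub_eq_add_neg] at h'
          exact h3.2.1 (sub_eq_iff_eq_add.mp h')
  · intro φ _ φ' _ h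
    simp only [Prod.mk.injEq] at h
    rw [h.1] at h
    exact add_right_cancel h.2

end Counting

end Multigraph

namespace Multigraph

section Base

variable {V E : Type} {G : Multigraph V E}

/-- The edge `e` has ends `u` and `v`. -/
def HasEnds (G : Multigraph V E) (e : E) (u v : V) : Prop :=
  (G.src e = u ∧ G.tgt e = v) ∨ (G.src e = v ∧ G.tgt e = u)

theorem HasEnds.symm {e : E} {u v : V} (h : G.HasEnds e u v) : G.HasEnds e v u :=
  Or.symm h

theorem HasEnds.reaches {P : E → Prop} {e : E} {u v : V} (h : G.HasEnds e u v) (he : P e) :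
    G.Reaches P u v :=
  Reaches.of_adjVia ⟨e, he, h⟩

/-- The edges with one end in `X` and the other one in `Y`. -/
def between (G : Multigraph V E) (X Y : Set V) : Set E :=
  {e | (G.src e ∈ X ∧ G.tgt e ∈ Y) ∨ (G.src e ∈ Y ∧ G.tgt e ∈ X)}

theorem mem_between_iff {X Y : Set V} {e : E} :
    e ∈ G.between X Y ↔ ∃ x ∈ X, ∃ y ∈ Y, G.HasEnds e x y := by
  constructor
  · rintro (⟨h1, h2⟩ | ⟨h1, h2⟩)
    · exact ⟨_, h1, _, h2, Or.inl ⟨rfl, rfl⟩⟩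
    · exact ⟨_, h2, _, h1, Or.inr ⟨rfl, rfl⟩⟩
  · rintro ⟨x, hx, y, hy, ⟨rfl, rfl⟩ | ⟨rfl, rfl⟩⟩
    · exact Or.inl ⟨hx, hy⟩
    · exact Or.inr ⟨hy, hx⟩

theorem between_union_right (X Y Z : Set V) :
    G.between X (Y ∪ Z) = G.between X Y ∪ G.between X Z := by
  ext e
  simp only [between, Set.mem_union, Set.mem_ofPred_eq]
  tauto

theorem between_comm (X Y : Set V) : G.between X Y = G.between Y X := by
  ext e
  simp only [between, Set.mem_ofPred_eq]
  tauto

theorem cutEdges_eq_between (X : Set V) : G.cutEdges X = G.between X Xᶜ := rfl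

theorem Reaches.avoids_or_reaches_src {P : E → Prop} {u v : V} (h : G.Reaches P u v) (e : E) :
    G.Reaches (fun e' => P e' ∧ e' ≠ e) u v ∨ G.Reaches P u (G.src e) := by
  induction h with
  | refl => exact Or.inl (Reaches.refl _)
  | @tail b c hab hbc ih =>
    rcases ih with ih | ih
    · obtain ⟨g, hg, hj⟩ := hbc
      by_cases hge : g = e
      · right
        subst hge
        rcases hj with ⟨h1, _⟩ | ⟨h1, _⟩
        · rw [h1]; exact hab
        · rw [h1]; exact Reaches.trans hab (Reaches.of_adjVia ⟨g, hg, Or.inr ⟨h1, by assumption⟩⟩)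
      · exact Or.inl (ih.trans (HasEnds.reaches hj ⟨hg, hge⟩))
    · exact Or.inr ih

/-- A walk inside `L` that ends in `X` can be cut off so as to use at most one edge leaving
`X`. -/
theorem Reaches.exists_single_crossing {L X : Set V} {P : E → Prop}
    (hP : ∀ e, P e → G.src e ∈ L ∧ G.tgt e ∈ L) (hD : (G.between X (L \ X)).Nonempty)
    {a x : V} (h : G.Reaches P a x) (hx : x ∈ X) :
    ∃ e ∈ G.between X (L \ X), ∃ y ∈ X,
      G.Reaches (fun e' => P e' ∧ (e' ∈ G.between X (L \ X) → e' = e)) a y := by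
  induction h using Relation.ReflTransGen.head_induction_on with
  | refl =>
    obtain ⟨e, he⟩ := hD
    exact ⟨e, he, x, hx, Reaches.refl _⟩
  | @head a b hab _ ih =>
    by_cases haX : a ∈ X
    · obtain ⟨e, he⟩ := hD
      exact ⟨e, he, a, haX, Reaches.refl _⟩
    · obtain ⟨g, hg, hj⟩ := hab
      have haL : a ∈ L := by
        rcases hj with ⟨rfl, _⟩ | ⟨_, rfl⟩
        exacts [(hP g hg).1, (hP g hg).2]
      by_cases hbX : b ∈ X
      · exact ⟨g, mem_between_iff.mpr ⟨b, hbX, a, ⟨haL, haX⟩, Or.symm hj⟩, b, hbX,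
          HasEnds.reaches hj ⟨hg, fun _ => rfl⟩⟩
      · obtain ⟨e, he, y, hy, hby⟩ := ih
        refine ⟨e, he, y, hy, (HasEnds.reaches hj ⟨hg, fun hgD => ?_⟩).trans hby⟩
        exfalso
        rcases hj with ⟨rfl, rfl⟩ | ⟨rfl, rfl⟩ <;> rcases hgD with ⟨h1, _⟩ | ⟨_, h1⟩ <;> tauto

/-- Let every edge cut of `G[L]` have at least two edges, and at least three if the side not
containing `z` misses `A`. Then some spanning connected subgraph of `G[L]` leaves two vertices
of `A` joined by the remaining edges. -/
theorem exists_spanning_set_and_connection [Finite V] {L A : Set V} {z : V} (hz : z ∈ L)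
    (h2 : ∀ X ⊆ L, X.Nonempty → X ≠ L → 2 ≤ (G.between X (L \ X)).ncard)
    (h3 : ∀ X ⊆ L, X.Nonempty → z ∉ X → (∀ x ∈ X, x ∉ A) → 3 ≤ (G.between X (L \ X)).ncard)
    (hA : ∃ a ∈ L ∩ A, ∃ b ∈ L ∩ A, a ≠ b) :
    ∃ T : Set E, (∀ e ∈ T, G.src e ∈ L ∧ G.tgt e ∈ L) ∧
      (∀ v ∈ L, G.Reaches (fun e => e ∈ T) z v) ∧ ∃ a ∈ L ∩ A, ∃ b ∈ L ∩ A, a ≠ b ∧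
      G.Reaches (fun e => e ∉ T ∧ G.src e ∈ L ∧ G.tgt e ∈ L) a b := by
  let Q : Set V → Prop := fun K => K ⊆ L ∧ z ∈ K ∧
    ∃ T : Set E, (∀ e ∈ T, G.src e ∈ K ∧ G.tgt e ∈ K) ∧
      (∀ v ∈ K, G.Reaches (fun e => e ∈ T) z v) ∧ ∃ a ∈ L ∩ A, ∃ b ∈ L ∩ A, a ≠ b ∧
      G.Reaches (fun e => e ∉ T ∧ G.src e ∈ L ∧ G.tgt e ∈ L) a b
  have hconnL : ∀ u ∈ L, ∀ v ∈ L, G.Reaches (fun e => G.src e ∈ L ∧ G.tgt e ∈ L) u v := by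
    intro u hu v hv
    by_contra hcon
    set X : Set V := {w | w ∈ L ∧ G.Reaches (fun e => G.src e ∈ L ∧ G.tgt e ∈ L) u w} with hX
    have hcut := h2 X (fun w hw => hw.1) ⟨u, hu, Reaches.refl _⟩
      (fun h => hcon (h.symm.subset hv).2)
    have hne : (G.between X (L \ X)).Nonempty := by
      rw [Set.nonempty_iff_ne_empty]
      intro h
      simp [h] at hcut
    obtain ⟨e, he⟩ := hne
    obtain ⟨x, hx, y, hy, hj⟩ := mem_between_iff.mp he
    refine hy.2 ⟨hy.1, hx.2.trans (hj.reaches ?_)⟩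
    rcases hj with ⟨rfl, rfl⟩ | ⟨rfl, rfl⟩
    exacts [⟨hx.1, hy.1⟩, ⟨hy.1, hx.1⟩]
  have hQz : Q {z} := by
    obtain ⟨a, ha, b, hb, hab⟩ := hA
    refine ⟨by simpa using hz, rfl, ∅, by simp, ?_, a, ha, b, hb, hab, ?_⟩
    · rintro v rfl
      exact Reaches.refl _
    · exact (hconnL a ha.1 b hb.1).mono fun e he => ⟨by simp, he⟩
  obtain ⟨K, hK⟩ := (Set.toFinite {K | Q K}).exists_maximal ⟨{z}, hQz⟩
  obtain ⟨hKL, hzK, T, hTK, hTz, a, ha, b, hb, hab, hJab⟩ := hK.prop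
  suffices hKeq : K = L by
    subst hKeq
    exact ⟨T, hTK, hTz, a, ha, b, hb, hab, hJab⟩
  by_contra hKne
  obtain ⟨w, hwL, hwK⟩ := Set.exists_of_ssubset (hKL.ssubset_of_ne hKne)
  set J : E → Prop := fun e => e ∉ T ∧ G.src e ∈ L ∧ G.tgt e ∈ L with hJ
  set O : E → Prop := fun e => G.src e ∈ L \ K ∧ G.tgt e ∈ L \ K with hO
  set X : Set V := {v | v ∈ L \ K ∧ G.Reaches O w v} with hX
  have hwX : w ∈ X := ⟨⟨hwL, hwK⟩, Reaches.refl _⟩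
  have hXL : X ⊆ L := fun v hv => hv.1.1
  have hzX : z ∉ X := fun h => h.1.2 hzK
  set D : Set E := G.between X (L \ X) with hD
  have hD2 : 2 ≤ D.ncard := h2 X hXL ⟨w, hwX⟩ (fun h => hzX (h.symm.subset hz))
  have hDends : ∀ e ∈ D, ∃ x ∈ X, ∃ y ∈ K, G.HasEnds e x y := by
    intro e he
    obtain ⟨x, hx, y, hy, hj⟩ := mem_between_iff.mp he
    refine ⟨x, hx, y, ?_, hj⟩
    by_contra hyK
    refine hy.2 ⟨⟨hy.1, hyK⟩, hx.2.trans (hj.reaches ?_)⟩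
    rcases hj with ⟨rfl, rfl⟩ | ⟨rfl, rfl⟩
    exacts [⟨hx.1, hy.1, hyK⟩, ⟨⟨hy.1, hyK⟩, hx.1⟩]
  have hcrit : ∀ e ∈ D, ∀ a' ∈ L ∩ A, ∀ b' ∈ L ∩ A, a' ≠ b' →
      ¬ G.Reaches (fun e' => J e' ∧ e' ≠ e) a' b' := by
    intro e he a' ha' b' hb' hne hreach
    obtain ⟨x, hx, y, hy, hj⟩ := hDends e he
    have hQ : Q (insert x K) := by
      refine ⟨Set.insert_subset hx.1.1 hKL, Or.inr hzK, insert e T, ?_, ?_,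
        a', ha', b', hb', hne, ?_⟩
      · rintro e' (rfl | he')
        · rcases hj with ⟨rfl, rfl⟩ | ⟨rfl, rfl⟩
          exacts [⟨Or.inl rfl, Or.inr hy⟩, ⟨Or.inr hy, Or.inl rfl⟩]
        · exact ⟨Or.inr (hTK e' he').1, Or.inr (hTK e' he').2⟩
      · have hmono : ∀ v ∈ K, G.Reaches (fun e' => e' ∈ insert e T) z v :=
          fun v hv => (hTz v hv).mono fun e' he' => Or.inr he'
        rintro v (rfl | hv)
        · exact (hmono y hy).trans (hj.symm.reaches (Or.inl rfl))
        · exact hmono v hv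
      · refine hreach.mono fun e' he' => ⟨?_, he'.1.2⟩
        rintro (h | h)
        exacts [he'.2 h, he'.1.1 h]
    exact hx.1.2 (hK.le_of_ge hQ (Set.subset_insert x K) (Set.mem_insert x K))
  have hXw : ∀ f ∈ D, ∀ x ∈ X, G.Reaches (fun e' => J e' ∧ e' ≠ f) x w := by
    intro f hf x hx
    refine (hx.2.mono fun e he => ⟨⟨fun heT => he.1.2 (hTK e heT).1, he.1.1, he.2.1⟩, ?_⟩).symm
    rintro rfl
    obtain ⟨_, _, y, hy, hj⟩ := hDends e hf
    rcases hj with ⟨_, rfl⟩ | ⟨rfl, _⟩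
    exacts [he.2.2 hy, he.1.2 hy]
  have hDne : D.Nonempty := Set.nonempty_of_ncard_ne_zero (by omega)
  have henter : ∀ a' ∈ L ∩ A, ∀ b' ∈ L ∩ A, a' ≠ b' → G.Reaches J a' b' →
      ∃ e ∈ D, ∀ f ∈ D, f ≠ e → G.Reaches (fun e' => J e' ∧ e' ≠ f) a' w := by
    intro a' ha' b' hb' hne hreach
    obtain ⟨e, he⟩ := hDne
    have hsrc := (hreach.avoids_or_reaches_src e).resolve_left (hcrit e he a' ha' b' hb' hne)
    obtain ⟨x, hx, y, hy, hj⟩ := hDends e he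
    have hJe : J e := by
      rcases hj with ⟨rfl, rfl⟩ | ⟨rfl, rfl⟩
      · exact ⟨fun h => hx.1.2 (hTK e h).1, hx.1.1, hKL hy⟩
      · exact ⟨fun h => hx.1.2 (hTK e h).2, hKL hy, hx.1.1⟩
    have hax : G.Reaches J a' x := by
      rcases hj with ⟨h, _⟩ | ⟨_, h⟩
      · exact h ▸ hsrc
      · exact hsrc.trans (h ▸ Reaches.of_edge hJe)
    obtain ⟨e₀, he₀, x₀, hx₀, hreach₀⟩ := hax.exists_single_crossing (L := L)
      (fun e he => he.2) ⟨e, he⟩ hx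
    refine ⟨e₀, he₀, fun f hf hfe => Reaches.trans (hreach₀.mono fun e' he' => ⟨he'.1, ?_⟩)
      (hXw f hf x₀ hx₀)⟩
    rintro rfl
    exact hfe (he'.2 hf)
  obtain ⟨ea, hea, hfa⟩ := henter a ha b hb hab hJab
  obtain ⟨eb, heb, hfb⟩ := henter b hb a ha hab.symm hJab.symm
  by_cases hc : ∃ c ∈ X, c ∈ A
  · obtain ⟨c, hcX, hcA⟩ := hc
    have hclose : ∀ a' ∈ L ∩ A, a' ≠ c → ∀ e ∈ D,
        (∀ f ∈ D, f ≠ e → G.Reaches (fun e' => J e' ∧ e' ≠ f) a' w) → False := by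
      intro a' ha' hne e he hf
      obtain ⟨f, hfD, hfe⟩ := Set.exists_ne_of_one_lt_ncard (s := D) (by omega) e
      exact hcrit f hfD a' ha' c ⟨hXL hcX, hcA⟩ hne
        ((hf f hfD hfe).trans (hXw f hfD c hcX).symm)
    by_cases hac : a = c
    · exact hclose b hb (fun h => hab (hac.trans h.symm)) eb heb hfb
    · exact hclose a ha hac ea hea hfa
  · push Not at hc
    have hD3 : 3 ≤ D.ncard := h3 X hXL ⟨w, hwX⟩ hzX hc
    have hpair : ({ea, eb} : Set E).ncard < D.ncard := by
      have := Set.ncard_insert_le ea {eb}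
      rw [Set.ncard_singleton] at this
      omega
    obtain ⟨f, hfD, hf⟩ := Set.exists_mem_notMem_of_ncard_lt_ncard hpair
    simp only [Set.mem_insert_iff, Set.mem_singleton_iff, not_or] at hf
    exact hcrit f hfD a ha b hb hab ((hfa f hfD hf.1).trans (hfb f hfD hf.2).symm)

theorem EdgeConnected.three_le_ncard_cutEdges (hG : G.EdgeConnected 3) {X : Set V}
    (hX : X.Nonempty) (hX' : X ≠ Set.univ) : 3 ≤ (G.cutEdges X).ncard := by
  by_contra hlt
  obtain ⟨u, hu⟩ := hX
  obtain ⟨v, hv⟩ := (Set.ne_univ_iff_exists_notMem X).mp hX'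
  obtain ⟨e, he, he'⟩ := ((hG _ (not_le.mp hlt)).2 u v).exists_cutEdges hu hv
  exact he' he

variable [Fintype E]

theorem TwoClosed.mem_of_reaches_pair {R : Set E} (hR : G.TwoClosed R) {g h : E} (hne : g ≠ h)
    (hreach : G.Reaches (fun e => e ∈ R ∨ e = h) (G.src g) (G.tgt g)) : g ∈ R := by
  by_contra hg
  obtain ⟨C, hC1, hCP, hCg, hCb⟩ := exists_signed_cycle (by simp [hg, hne]) hreach
  have hsub : {e | C e ≠ 0} \ R ⊆ {g, h} := by
    rintro e ⟨he, heR⟩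
    rcases hCP e he with (h' | h') | h'
    exacts [absurd h' heR, Or.inr h', Or.inl h']
  have hcard : ({e | C e ≠ 0} \ R).ncard ≤ 2 :=
    (Set.ncard_le_ncard hsub (Set.toFinite _)).trans (Set.ncard_pair hne).le
  exact hg (hR C hC1 hCb hcard (show C g ≠ 0 by simp [hCg]))

theorem TwoClosed.mem_of_reaches {R : Set E} (hR : G.TwoClosed R) {g : E}
    (hreach : G.Reaches (fun e => e ∈ R) (G.src g) (G.tgt g)) : g ∈ R := by
  by_contra hg
  obtain ⟨C, hC1, hCP, hCg, hCb⟩ := exists_signed_cycle (P := fun e => e ∈ R) hg hreach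
  have hsub : {e | C e ≠ 0} \ R ⊆ {g} := by
    rintro e ⟨he, heR⟩
    rcases hCP e he with h' | h'
    exacts [absurd h' heR, h']
  have hcard : ({e | C e ≠ 0} \ R).ncard ≤ 2 := by
    have := Set.ncard_le_ncard hsub (Set.toFinite _)
    rw [Set.ncard_singleton] at this
    omega
  exact hg (hR C hC1 hCb hcard (show C g ≠ 0 by simp [hCg]))

/-- Two edges joining the same two connected pieces of a two-closed set belong to it. -/
theorem TwoClosed.reaches_of_pair {R : Set E} (hR : G.TwoClosed R) {g h : E} (hne : g ≠ h)
    {u u' x x' : V} (hg : G.HasEnds g u x) (hh : G.HasEnds h u' x')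
    (hu : G.Reaches (fun e => e ∈ R) u u') (hx : G.Reaches (fun e => e ∈ R) x x') :
    G.Reaches (fun e => e ∈ R) u x := by
  refine hg.reaches (hR.mem_of_reaches_pair hne ?_)
  have hux : G.Reaches (fun e => e ∈ R ∨ e = h) u x :=
    ((hu.mono fun _ => Or.inl).trans (hh.reaches (P := fun e => e ∈ R ∨ e = h) (Or.inr rfl))).trans
      (hx.symm.mono fun _ => Or.inl)
  rcases hg with ⟨rfl, rfl⟩ | ⟨rfl, rfl⟩
  exacts [hux, hux.symm]

/-- A stage in the construction of a set `S` of edges with connected complement whose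
two-closure is everything: the two-closure of `S` already connects `U`. -/
structure IsStage (G : Multigraph V E) (U : Set V) (S : Set E) : Prop where
  nonempty : U.Nonempty
  ends_mem : ∀ e ∈ S, G.src e ∈ U ∧ G.tgt e ∈ U
  connected : ∀ u v, G.Reaches (fun e => e ∉ S) u v
  reaches : ∀ R, S ⊆ R → G.TwoClosed R → ∀ u ∈ U, ∀ v ∈ U, G.Reaches (fun e => e ∈ R) u v

theorem IsStage.insert_of_pair {U : Set V} {S : Set E} (h : G.IsStage U S) {w u u' : V}
    (hu : u ∈ U) (hu' : u' ∈ U) {g g' : E} (hne : g ≠ g')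
    (hg : G.HasEnds g u w) (hg' : G.HasEnds g' u' w) : G.IsStage (insert w U) S where
  nonempty := Set.insert_nonempty _ _
  ends_mem e he := ⟨Or.inr (h.ends_mem e he).1, Or.inr (h.ends_mem e he).2⟩
  connected := h.connected
  reaches R hSR hR := by
    have hw : ∀ v ∈ insert w U, G.Reaches (fun e => e ∈ R) u v := by
      rintro v (rfl | hv)
      · exact hR.reaches_of_pair hne hg hg' (h.reaches R hSR hR u hu u' hu') (Reaches.refl _)
      · exact h.reaches R hSR hR u hu v hv
    exact fun v hv v' hv' => (hw v hv).symm.trans (hw v' hv')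

/-- A set outside `U` that is connected, cut off from the rest of the complement of `U` by at
most one edge, and minimal as such. -/
theorem exists_minimal_end [Finite V] {U : Set V} (hU : U ≠ Set.univ) :
    ∃ L ⊆ Uᶜ, L.Nonempty ∧ (G.between L (U ∪ L)ᶜ).ncard ≤ 1 ∧
      ∀ X ⊆ L, X.Nonempty → X ≠ L → 2 ≤ (G.between X (L \ X)).ncard := by
  let Q : Set V → Prop := fun L => L ⊆ Uᶜ ∧ L.Nonempty ∧ (G.between L (U ∪ L)ᶜ).ncard ≤ 1
  have hQ : Q Uᶜ := by
    refine ⟨subset_rfl, Set.nonempty_compl.mpr hU, ?_⟩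
    rw [Set.union_compl_self, Set.compl_univ]
    simp [between]
  obtain ⟨L, hL⟩ := (Set.toFinite {L | Q L}).exists_minimal ⟨Uᶜ, hQ⟩
  obtain ⟨hLU, hLne, hL1⟩ := hL.prop
  refine ⟨L, hLU, hLne, hL1, fun X hXL hXne hXneL => ?_⟩
  by_contra hlt
  have hsplit : ∀ Y ⊆ L, Y.Nonempty → Y ≠ L → (G.between Y (L \ Y)).ncard ≤ 1 →
      1 ≤ (G.between Y (U ∪ L)ᶜ).ncard := by
    intro Y hYL hYne hYneL hY1
    by_contra hY0
    refine hYneL (hYL.antisymm (hL.le_of_le ⟨hYL.trans hLU, hYne, ?_⟩ hYL))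
    have hset : (U ∪ Y)ᶜ = (U ∪ L)ᶜ ∪ (L \ Y) := by
      ext v
      have h1 := @hYL v
      have h2 := @hLU v
      simp only [Set.mem_compl_iff, Set.mem_union, Set.mem_sdiff] at *
      tauto
    rw [hset, between_union_right]
    have := Set.ncard_union_le (G.between Y (U ∪ L)ᶜ) (G.between Y (L \ Y))
    omega
  have hX := hsplit X hXL hXne hXneL (by omega)
  have hX'ne : (L \ X).Nonempty := by
    rw [Set.sdiff_nonempty]
    exact fun h => hXneL (hXL.antisymm h)
  have hX' := hsplit (L \ X) Set.sdiff_subset hX'ne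
    (fun h => by
      obtain ⟨x, hx⟩ := hXne
      exact (h.symm.subset (hXL hx)).2 hx)
    (by rw [Set.sdiff_sdiff_cancel_left hXL, between_comm]; omega)
  have hunion : G.between L (U ∪ L)ᶜ =
      G.between X (U ∪ L)ᶜ ∪ G.between (L \ X) (U ∪ L)ᶜ := by
    rw [between_comm L, between_comm X, between_comm (L \ X), ← between_union_right,
      Set.union_sdiff_cancel hXL]
  have hdisj : Disjoint (G.between X (U ∪ L)ᶜ) (G.between (L \ X) (U ∪ L)ᶜ) := by
    rw [Set.disjoint_left]
    intro e h1 h2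
    have h3 := @hXL (G.src e)
    have h4 := @hXL (G.tgt e)
    simp only [between, Set.mem_ofPred_eq, Set.mem_compl_iff, Set.mem_union, Set.mem_sdiff] at *
    tauto
  rw [hunion, Set.ncard_union_eq hdisj (Set.toFinite _) (Set.toFinite _)] at hL1
  omega

theorem IsStage.exists_larger [Finite V] (hG : G.EdgeConnected 3) {U : Set V} {S : Set E}
    (h : G.IsStage U S) (hU : U ≠ Set.univ) : ∃ U' S', G.IsStage U' S' ∧ U ⊂ U' := by
  by_cases hpair : ∃ w ∉ U, ∃ u ∈ U, ∃ u' ∈ U, ∃ g g' : E, g ≠ g' ∧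
      G.HasEnds g u w ∧ G.HasEnds g' u' w
  · obtain ⟨w, hw, u, hu, u', hu', g, g', hne, hg, hg'⟩ := hpair
    exact ⟨_, S, h.insert_of_pair hu hu' hne hg hg', Set.ssubset_insert hw⟩
  obtain ⟨L, hLU, hLne, hL1, h2⟩ := exists_minimal_end (G := G) hU
  have hdisjLU : ∀ v ∈ L, v ∉ U := fun v hv => hLU hv
  -- The end in `L` of the only edge to the rest of the complement of `U`
  obtain ⟨z, hz, hzend⟩ : ∃ z ∈ L, ∀ x ∈ L, ∀ y ∈ (U ∪ L)ᶜ, ∀ e, G.HasEnds e x y → x = z := by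
    rcases Set.eq_empty_or_nonempty (G.between L (U ∪ L)ᶜ) with hempty | ⟨e₀, he₀⟩
    · obtain ⟨z, hz⟩ := hLne
      refine ⟨z, hz, fun x hx y hy e he => ?_⟩
      have : e ∈ G.between L (U ∪ L)ᶜ := mem_between_iff.mpr ⟨x, hx, y, hy, he⟩
      exact absurd this (hempty ▸ Set.notMem_empty e)
    · obtain ⟨z, hz, y₀, hy₀, hj₀⟩ := mem_between_iff.mp he₀
      refine ⟨z, hz, fun x hx y hy e he => ?_⟩
      have hmem : e ∈ G.between L (U ∪ L)ᶜ := mem_between_iff.mpr ⟨x, hx, y, hy, he⟩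
      have heq : e = e₀ := (Set.ncard_le_one (Set.toFinite _)).mp hL1 e hmem e₀ he₀
      subst heq
      have hy' : y ∉ L := fun h' => hy (Or.inr h')
      rcases he with ⟨rfl, rfl⟩ | ⟨rfl, rfl⟩ <;> rcases hj₀ with ⟨h1, h2⟩ | ⟨h1, h2⟩
      · exact h1
      · exact absurd (h2 ▸ hz) hy'
      · exact absurd (h1 ▸ hz) hy'
      · exact h2
  set A : Set V := {x | ∃ u ∈ U, ∃ g, G.HasEnds g u x} with hA
  have hUne := h.nonempty
  have hproper : ∀ X ⊆ L, X ≠ Set.univ := by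
    rintro X hXL rfl
    obtain ⟨u, hu⟩ := hUne
    exact hdisjLU u (hXL trivial) hu
  have h3 : ∀ X ⊆ L, X.Nonempty → z ∉ X → (∀ x ∈ X, x ∉ A) →
      3 ≤ (G.between X (L \ X)).ncard := by
    intro X hXL hXne hzX hXA
    refine (hG.three_le_ncard_cutEdges hXne (hproper X hXL)).trans
      (Set.ncard_le_ncard ?_ (Set.toFinite _))
    intro e he
    rw [cutEdges_eq_between] at he
    obtain ⟨x, hx, y, hy, hj⟩ := mem_between_iff.mp he
    refine mem_between_iff.mpr ⟨x, hx, y, ⟨?_, hy⟩, hj⟩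
    by_contra hyL
    by_cases hyU : y ∈ U
    · exact hXA x hx ⟨y, hyU, e, hj.symm⟩
    · refine hzX (hzend x (hXL hx) y ?_ e hj ▸ hx)
      rintro (h' | h')
      exacts [hyU h', hyL h']
  have hAA : ∃ a ∈ L ∩ A, ∃ b ∈ L ∩ A, a ≠ b := by
    have hcut := hG.three_le_ncard_cutEdges hLne (hproper L subset_rfl)
    have hset : Lᶜ = (U ∪ L)ᶜ ∪ U := by
      ext v
      have := hdisjLU v
      simp only [Set.mem_compl_iff, Set.mem_union]
      tauto
    rw [cutEdges_eq_between, hset, between_union_right] at hcut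
    have hle := Set.ncard_union_le (G.between L (U ∪ L)ᶜ) (G.between L U)
    obtain ⟨g, hg, g', hg', hne⟩ := (Set.one_lt_ncard (Set.toFinite _)).mp
      (show 1 < (G.between L U).ncard by omega)
    obtain ⟨a, ha, u, hu, hj⟩ := mem_between_iff.mp hg
    obtain ⟨b, hb, u', hu', hj'⟩ := mem_between_iff.mp hg'
    refine ⟨a, ⟨ha, u, hu, g, hj.symm⟩, b, ⟨hb, u', hu', g', hj'.symm⟩, ?_⟩
    rintro rfl
    exact hpair ⟨a, hdisjLU a ha, u, hu, u', hu', g, g', hne, hj.symm, hj'.symm⟩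
  obtain ⟨T, hTL, hTz, a, ⟨haL, u, hu, g, hg⟩, b, ⟨hbL, u', hu', g', hg'⟩, hab, hJ⟩ :=
    exists_spanning_set_and_connection hz h2 h3 hAA
  set J : E → Prop := fun e => e ∉ T ∧ G.src e ∈ L ∧ G.tgt e ∈ L with hJdef
  set F : Set E := {e | J e ∧ G.Reaches J a (G.src e)} with hF
  have hgne : g ≠ g' := by
    rintro rfl
    have h4 := hdisjLU a haL
    have h5 := hdisjLU b hbL
    rcases hg with ⟨rfl, rfl⟩ | ⟨rfl, rfl⟩ <;> rcases hg' with ⟨h6, h7⟩ | ⟨h6, h7⟩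
    · exact hab h7
    · exact h5 (h6 ▸ hu)
    · exact h4 (h6 ▸ hu')
    · exact hab h6
  have hFreach : ∀ v, G.Reaches J a v → G.Reaches (fun e => e ∈ F) a v := by
    intro v hv
    induction hv with
    | refl => exact Reaches.refl _
    | @tail c d hac hcd ih =>
      obtain ⟨e, he, hj⟩ := hcd
      refine ih.trans (HasEnds.reaches hj ⟨he, ?_⟩)
      rcases hj with ⟨h1, _⟩ | ⟨_, h1⟩
      · rw [h1]; exact hac
      · exact Reaches.trans hac (h1 ▸ (Reaches.of_edge he).symm)
  refine ⟨U ∪ {v | G.Reaches J a v}, S ∪ F, ⟨hUne.mono Set.subset_union_left, ?_, ?_, ?_⟩, ?_⟩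
  · rintro e (he | he)
    · exact ⟨Or.inl (h.ends_mem e he).1, Or.inl (h.ends_mem e he).2⟩
    · exact ⟨Or.inr he.2, Or.inr (he.2.trans (Reaches.of_edge he.1))⟩
  · intro v v'
    have hT : ∀ x ∈ L, G.Reaches (fun e => e ∉ S ∪ F) z x := by
      intro x hx
      refine (hTz x hx).mono fun e he => ?_
      rintro (h' | h')
      · exact hdisjLU _ (hTL e he).1 (h.ends_mem e h').1
      · exact h'.1.1 he
    refine (h.connected v v').of_forall_edge fun e he => ?_
    by_cases heF : e ∈ F
    · exact (hT _ heF.1.2.1).symm.trans (hT _ heF.1.2.2)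
    · exact Reaches.of_edge (by simp only [Set.mem_union, not_or]; exact ⟨he, heF⟩)
  · intro R hSR hR
    have hUR := h.reaches R (Set.subset_union_left.trans hSR) hR
    have haR : ∀ v, G.Reaches J a v → G.Reaches (fun e => e ∈ R) a v :=
      fun v hv => (hFreach v hv).mono fun e he => hSR (Or.inr he)
    have hua : G.Reaches (fun e => e ∈ R) u a :=
      hR.reaches_of_pair hgne hg hg' (hUR u hu u' hu') (haR b hJ)
    have hall : ∀ v ∈ U ∪ {v | G.Reaches J a v}, G.Reaches (fun e => e ∈ R) u v := by
      rintro v (hv | hv)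
      · exact hUR u hu v hv
      · exact hua.trans (haR v hv)
    exact fun v hv v' hv' => (hall v hv).symm.trans (hall v' hv')
  · exact ⟨Set.subset_union_left, fun hsub => hdisjLU a haL (hsub (Or.inr (Reaches.refl a)))⟩

/-- A 3-edge-connected graph has a set of edges with connected complement whose two-closure
is everything. -/
theorem EdgeConnected.exists_peripheral_base [Finite V] (hG : G.EdgeConnected 3) :
    ∃ S : Set E, (∀ u v, G.Reaches (fun e => e ∉ S) u v) ∧
      ∀ R, S ⊆ R → G.TwoClosed R → R = Set.univ := by
  have hconn := hG ∅ (by simp)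
  obtain ⟨r⟩ := hconn.1
  have hstage : G.IsStage {r} ∅ :=
    ⟨Set.singleton_nonempty r, by simp, hconn.2, by
      rintro R - - u rfl v rfl
      exact Reaches.refl _⟩
  obtain ⟨U, hU⟩ := (Set.toFinite {U | ∃ S, G.IsStage U S}).exists_maximal ⟨{r}, ∅, hstage⟩
  obtain ⟨S, hS⟩ := hU.prop
  have hUuniv : U = Set.univ := by
    by_contra hne
    obtain ⟨U', S', hS', hlt⟩ := hS.exists_larger hG hne
    exact hlt.2 (hU.le_of_ge ⟨S', hS'⟩ hlt.1)
  subst hUuniv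
  refine ⟨S, hS.connected, fun R hSR hR => Set.eq_univ_of_forall fun e => ?_⟩
  exact hR.mem_of_reaches (hS.reaches R hSR hR _ trivial _ trivial)

end Base

end Multigraph

theorem half_mul_zpow_le_of_pow_le {m d N : ℕ} {x : ℝ} (hx : x = m) (hm : 1 ≤ m)
    (h : m ^ d ≤ 2 ^ d * N) {ℓ : ℤ} (hℓ : ℓ = d - 1) :
    (1 / 2 : ℝ) * (x / 2) ^ ℓ ≤ N := by
  have hm' : (1 : ℝ) ≤ m := by exact_mod_cast hm
  have hpos : (0 : ℝ) < x / 2 := by rw [hx]; positivity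
  have hN : (x / 2) ^ d ≤ N := by
    rw [div_pow, div_le_iff₀ (by positivity), hx, mul_comm]
    exact_mod_cast h
  refine le_trans ?_ hN
  rw [hℓ, zpow_sub_one₀ hpos.ne', zpow_natCast, mul_comm, mul_assoc]
  refine mul_le_of_le_one_right (by positivity) ?_
  rw [inv_mul_le_iff₀ hpos, hx]
  linarith

/-- For a 3-edge-connected oriented graph with `ℓ = |E| - |V|` and an abelian group `Γ`
of order `k ≥ 6`, for every `f : E → Γ` there are at least `(1/2)((k-6)/2)^ℓ` flows
avoiding `f` when `k` is odd, and at least `(1/2)((k-4)/2)^ℓ` such flows when `k` is even. -/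
theorem many_group_connectivity_flows_large_groups {V E Γ : Type} [Fintype V] [Fintype E]
    [Fintype Γ] [AddCommGroup Γ] (G : Multigraph V E) (hG : G.EdgeConnected 3)
    (k : ℕ) (hk : Fintype.card Γ = k) (hk6 : 6 ≤ k)
    (ℓ : ℤ) (hℓ : ℓ = (Fintype.card E : ℤ) - (Fintype.card V : ℤ))
    (f : E → Γ) :
    (Odd k →
      (1 / 2 : ℝ) * (((k : ℝ) - 6) / 2) ^ ℓ ≤
        Nat.card {φ : E → Γ // G.IsFlow φ ∧ ∀ e : E, φ e ≠ f e}) ∧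
    (Even k →
      (1 / 2 : ℝ) * (((k : ℝ) - 4) / 2) ^ ℓ ≤
        Nat.card {φ : E → Γ // G.IsFlow φ ∧ ∀ e : E, φ e ≠ f e}) := by
  obtain ⟨S, hper, hS⟩ := hG.exists_peripheral_base
  have hconn0 := hG ∅ (by simp)
  have hne : Nonempty V := hconn0.1
  have hconn : ∀ u v, G.Reaches (fun _ => True) u v :=
    fun u v => (hconn0.2 u v).mono fun _ _ => trivial
  have hΓ : 1 < Fintype.card Γ := by omega
  have hVE : Fintype.card V ≤ Fintype.card E + 1 := by
    have hcard := Multigraph.card_avoiding_univ (G := G) hconn (fun _ => (∅ : Finset Γ))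
    refine (Nat.pow_le_pow_iff_right hΓ).mp (hcard ▸ Nat.le_mul_of_pos_left _ ?_)
    exact Finset.card_pos.mpr ⟨0, by simp [Multigraph.mem_avoiding]⟩
  obtain ⟨d, hd⟩ := Nat.exists_eq_add_of_le' hVE
  have hℓd : ℓ = d - 1 := by omega
  constructor
  · rintro ⟨j, hj⟩
    obtain ⟨c, hc⟩ : ∃ c : Γ, c ≠ 0 := by
      have := Fintype.one_lt_card_iff_nontrivial.mp hΓ
      exact exists_ne 0
    have hcount := Multigraph.pow_le_two_pow_mul_card hconn hS hper f hc
      (fun _ => Finset.card_le_three) hd.symm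
    refine half_mul_zpow_le_of_pow_le (m := k - 6) ?_ (by omega) (hk ▸ hcount) hℓd
    rw [Nat.cast_sub hk6]
    norm_num
  · intro heven
    have := Fact.mk Nat.prime_two
    obtain ⟨c, hc⟩ := exists_prime_addOrderOf_dvd_card (G := Γ) 2 (hk ▸ heven.two_dvd)
    have hc0 : c ≠ 0 := by
      rintro rfl
      simp at hc
    have hcc : -c = c := by
      rw [neg_eq_iff_add_eq_zero, ← two_nsmul, ← hc, addOrderOf_nsmul_eq_zero]
    have hcount := Multigraph.pow_le_two_pow_mul_card hconn hS hper f hc0 (q := 2)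
      (fun a => by
        rw [sub_eq_add_neg, hcc, Finset.pair_eq_singleton]
        exact Finset.card_le_two) hd.symm
    refine half_mul_zpow_le_of_pow_le (m := k - 4) ?_ (by omega) (hk ▸ hcount) hℓd
    rw [Nat.cast_sub (by omega)]
    norm_num
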